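/- Let K be a field and let W be a four-dimensional K-vector space. For an invertible linear automorphism g of W, the induced automorphism ⋀²g of ⋀²W equals the identity if and only if g = c · id for some c ∈ K with c² = 1. -/

import Mathlib

open TensorProduct

set_option synthInstance.maxHeartbeats 1000000
set_option maxHeartbeats 1000000

/-!
If `f` fixes `v₁ ∧ ⋯ ∧ vₙ`, then `f vₖ ∧ (v₁ ∧ ⋯ ∧ vₙ) = f vₖ ∧ (f v₁ ∧ ⋯ ∧ f vₙ) = 0`. Take the
`vₖ` from a basis `b` with more than `n` elements: for `j ≠ i` they can be chosen to include `b i`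
and omit `b j`, so `f (b i)` has no component along `b j`, and the matrix of `f` is diagonal. The
product of any `n` of its diagonal entries is then `1`. Exchanging one factor for another shows that
all these entries agree, so `f` is a scalar whose `n`-th power is `1`.
-/

theorem exists_embedding_notMem_range {ι : Type*} {m : ℕ} (hι : (m + 1 : ℕ) < ENat.card ι)
    (i j : ι) :
    ∃ t : Fin m ↪ ι, i ∉ Set.range t ∧ j ∉ Set.range t := by
  have h_card : (({i, j} : Set ι).ncard + m : ℕ∞) ≤ ENat.card ι := by
    have h_pair : ({i, j} : Set ι).ncard ≤ 2 := by
      simpa using Set.ncard_insert_le i {j}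
    calc
      (({i, j} : Set ι).ncard + m : ℕ∞) ≤ (m + 1 : ℕ) + 1 := by norm_cast; lia
      _ ≤ ENat.card ι := Order.add_one_le_of_lt hι
  obtain ⟨t, ht⟩ := Fin.Embedding.exists_embedding_disjoint_range_of_add_le_ENat_card h_card
  rw [Set.disjoint_insert_left, Set.disjoint_singleton_left] at ht
  exact ⟨t, ht⟩

theorem eq_of_forall_embedding_prod_eq_one {ι R : Type*} [CommMonoid R] {n : ℕ} (hn : n ≠ 0)
    (hι : n < ENat.card ι) {d : ι → R} (hd : ∀ s : Fin n ↪ ι, ∏ k, d (s k) = 1) (i j : ι) :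
    d i = d j := by
  obtain ⟨m, rfl⟩ := Nat.exists_eq_succ_of_ne_zero hn
  obtain ⟨t, hi, hj⟩ := exists_embedding_notMem_range hι i j
  have h_prod {a : ι} (ha : a ∉ Set.range t) : d a * ∏ k, d (t k) = 1 := by
    simpa [Fin.prod_univ_succ] using hd (Fin.Embedding.cons t ha)
  exact left_inv_eq_right_inv (h_prod hi) (by rw [mul_comm, h_prod hj])

section ExteriorPower

variable {R M N : Type*} [CommRing R] [AddCommGroup M] [Module R M] [AddCommGroup N] [Module R N]
  {n : ℕ}

theorem exteriorPower_coe_map (f : M →ₗ[R] N) (ω : ⋀[R]^n M) :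
    (exteriorPower.map n f ω : ExteriorAlgebra R N) = ExteriorAlgebra.map f ω := by
  have h : (⋀[R]^n N).subtype ∘ₗ exteriorPower.map n f =
      (ExteriorAlgebra.map f).toLinearMap ∘ₗ (⋀[R]^n M).subtype := by
    ext v
    simp [ExteriorAlgebra.map_apply_ιMulti]
  exact LinearMap.congr_fun h ω

theorem exteriorPower_map_smul (c : R) (f : M →ₗ[R] N) :
    exteriorPower.map n (c • f) = c ^ n • exteriorPower.map n f := by
  ext v : 2
  simp [AlternatingMap.map_smul_univ, -exteriorPower.ιMulti_apply_coe]

theorem exteriorPower_ιMulti_comp_eq_of_map_eq_id {f : M →ₗ[R] M}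
    (hf : exteriorPower.map n f = .id) (v : Fin n → M) :
    exteriorPower.ιMulti R n (f ∘ v) = exteriorPower.ιMulti R n v := by
  rw [← exteriorPower.map_apply_ιMulti, hf, LinearMap.id_apply]

theorem exteriorPower_ιMulti_cons_eq_zero_of_ιMulti_eq {v w : Fin n → M}
    (h : exteriorPower.ιMulti R n v = exteriorPower.ιMulti R n w) (k : Fin n) :
    exteriorPower.ιMulti R (n + 1) (Fin.cons (v k) w) = 0 := by
  have h_wedge (u : Fin n → M) :
      (exteriorPower.ιMulti R (n + 1) (Fin.cons (v k) u) : ExteriorAlgebra R M) =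
        ExteriorAlgebra.ι R (v k) * exteriorPower.ιMulti R n u := by
    rw [exteriorPower.ιMulti_apply_coe, ExteriorAlgebra.ιMulti_succ_apply]
    rfl
  have h_cons : exteriorPower.ιMulti R (n + 1) (Fin.cons (v k) w) =
      exteriorPower.ιMulti R (n + 1) (Fin.cons (v k) v) :=
    Subtype.ext (by rw [h_wedge, h_wedge, h])
  rw [h_cons]
  exact AlternatingMap.map_eq_zero_of_eq _ _ (i := 0) (j := k.succ) (by simp)
    (Fin.succ_ne_zero k).symm

theorem pairingDual_ιMulti_cons_cons (φ : Fin n → Module.Dual R M) {v : Fin n → M}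
    {ψ : Module.Dual R M} (hψ : ∀ k, ψ (v k) = 0) (x : M) :
    exteriorPower.pairingDual R M (n + 1) (exteriorPower.ιMulti R (n + 1) (Fin.cons ψ φ))
        (exteriorPower.ιMulti R (n + 1) (Fin.cons x v)) =
      ψ x * exteriorPower.pairingDual R M n (exteriorPower.ιMulti R n φ)
        (exteriorPower.ιMulti R n v) := by
  simp only [exteriorPower.pairingDual_ιMulti_ιMulti]
  rw [Matrix.det_succ_column_zero, Fin.sum_univ_succ]
  simp [hψ, Matrix.submatrix]

end ExteriorPower

section Basis

variable {R M ι : Type*} [CommRing R] [AddCommGroup M] [Module R M] (b : Module.Basis ι R M)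
  {n : ℕ} {f : M →ₗ[R] M}

theorem pairingDual_ιMulti_basis_coord_ιMulti_basis (s : Fin n ↪ ι) :
    exteriorPower.pairingDual R M n (exteriorPower.ιMulti R n (b.coord ∘ s))
      (exteriorPower.ιMulti R n (b ∘ s)) = 1 := by
  classical
  have h : (Matrix.of fun k l ↦ b.coord (s l) (b (s k))) = 1 := by
    ext k l
    simp [Matrix.one_apply, Finsupp.single_apply]
  simp only [exteriorPower.pairingDual_ιMulti_ιMulti, Function.comp_apply, h, Matrix.det_one]

theorem basis_repr_eq_zero_of_exteriorPower_ιMulti_cons_eq_zero {s : Fin n ↪ ι} {j : ι}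
    (hj : j ∉ Set.range s) {x : M}
    (h : exteriorPower.ιMulti R (n + 1) (Fin.cons x (b ∘ s)) = 0) : b.repr x j = 0 := by
  have h_zero (k : Fin n) : b.coord j (b (s k)) = 0 := by
    rw [b.coord_apply, b.repr_self, Finsupp.single_eq_of_ne fun hjk ↦ hj ⟨k, hjk.symm⟩]
  have h_pairing := pairingDual_ιMulti_cons_cons (b.coord ∘ s) (v := b ∘ s) h_zero x
  rw [h, map_zero, pairingDual_ιMulti_basis_coord_ιMulti_basis, mul_one] at h_pairing
  exact h_pairing.symm

theorem basis_repr_map_eq_zero_of_exteriorPower_map_eq_id (hn : n ≠ 0) (hι : n < ENat.card ι)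
    (hf : exteriorPower.map n f = .id) {i j : ι} (hij : i ≠ j) : b.repr (f (b i)) j = 0 := by
  obtain ⟨m, rfl⟩ := Nat.exists_eq_succ_of_ne_zero hn
  obtain ⟨t, hi, hj⟩ := exists_embedding_notMem_range hι i j
  let s : Fin (m + 1) ↪ ι := Fin.Embedding.cons t hi
  have hjs : j ∉ Set.range s := by
    simp [s, Fin.range_cons, hij.symm, hj]
  exact basis_repr_eq_zero_of_exteriorPower_ιMulti_cons_eq_zero b hjs
    (exteriorPower_ιMulti_cons_eq_zero_of_ιMulti_eq
      (exteriorPower_ιMulti_comp_eq_of_map_eq_id hf (b ∘ s)) 0)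

theorem prod_basis_repr_map_self_eq_one_of_exteriorPower_map_eq_id
    (hf : exteriorPower.map n f = .id)
    (h_diag : ∀ i j, i ≠ j → b.repr (f (b i)) j = 0) (s : Fin n ↪ ι) :
    ∏ k, b.repr (f (b (s k))) (s k) = 1 := by
  have h_matrix : (Matrix.of fun k l ↦ b.coord (s l) (f (b (s k)))) =
      Matrix.diagonal fun k ↦ b.repr (f (b (s k))) (s k) := by
    ext k l
    obtain rfl | hkl := eq_or_ne k l
    · simp
    · simp [hkl, h_diag _ _ (s.injective.ne hkl)]
  rw [← pairingDual_ιMulti_basis_coord_ιMulti_basis b s,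
    ← exteriorPower_ιMulti_comp_eq_of_map_eq_id hf, exteriorPower.pairingDual_ιMulti_ιMulti,
    ← Matrix.det_diagonal, ← h_matrix]
  rfl

end Basis

theorem exteriorPower_map_eq_id_iff_of_basis {R M ι : Type*} [CommRing R] [AddCommGroup M]
    [Module R M] (b : Module.Basis ι R M) {n : ℕ} (hn : n ≠ 0) (hι : n < ENat.card ι)
    (f : M →ₗ[R] M) :
    exteriorPower.map n f = .id ↔ ∃ c : R, c ^ n = 1 ∧ f = c • .id := by
  refine ⟨fun hf ↦ ?_, ?_⟩
  · have h_diag : ∀ i j, i ≠ j → b.repr (f (b i)) j = 0 := fun _ _ ↦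
      basis_repr_map_eq_zero_of_exteriorPower_map_eq_id b hn hι hf
    have h_prod := prod_basis_repr_map_self_eq_one_of_exteriorPower_map_eq_id b hf h_diag
    obtain ⟨s, -⟩ := Fin.Embedding.exists_embedding_disjoint_range_of_add_le_ENat_card
      (s := (∅ : Set ι)) (by simpa using hι.le)
    let c := b.repr (f (b (s ⟨0, hn.pos⟩))) (s ⟨0, hn.pos⟩)
    have h_const (i : ι) : b.repr (f (b i)) i = c :=
      eq_of_forall_embedding_prod_eq_one (d := fun i ↦ b.repr (f (b i)) i) hn hι h_prod _ _
    refine ⟨c, by simpa [h_const] using h_prod s, b.ext fun i ↦ b.ext_elem fun j ↦ ?_⟩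
    obtain rfl | hij := eq_or_ne i j
    · simp [h_const]
    · simp [h_diag i j hij, hij]
  · rintro ⟨c, hc, rfl⟩
    rw [exteriorPower_map_smul, hc, one_smul, exteriorPower.map_id]

theorem second_exterior_power_map_eq_id_iff_general {R M : Type*} [CommRing R] [AddCommGroup M]
    [Module R M] [Module.Free R M] {n : ℕ} (hn : n ≠ 0) (hM : n < Module.rank R M)
    (f : M →ₗ[R] M) :
    exteriorPower.map n f = .id ↔ ∃ c : R, c ^ n = 1 ∧ f = c • .id := by
  have : Nontrivial R := by
    by_contra! hR
    rw [rank_subsingleton] at hM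
    exact hn (Nat.lt_one_iff.mp (mod_cast hM))
  let b := Module.Free.chooseBasis R M
  rw [← b.mk_eq_rank''] at hM
  exact exteriorPower_map_eq_id_iff_of_basis b hn (Cardinal.natCast_lt_toENat.mpr hM) f

/-- for a four-dimensional vector space `W` over a field `K` and an invertible
linear automorphism `g` of `W`, the induced automorphism `⋀²g` of `⋀²W` (the restriction of
the functorial exterior algebra map) is the identity if and only if `g = c • id` for some
`c ∈ K` with `c² = 1`. -/
theorem second_exterior_power_map_eq_id_iff
    (K W : Type*) [Field K]
    [AddCommGroup W] [Module K W] [FiniteDimensional K W]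
    (hW : Module.finrank K W = 4) (g : W ≃ₗ[K] W) :
    (∀ ω : ⋀[K]^2 W,
        ExteriorAlgebra.map (g : W →ₗ[K] W) (ω : ExteriorAlgebra K W) = (ω : ExteriorAlgebra K W))
      ↔ ∃ c : K, c ^ 2 = 1 ∧ ∀ w : W, g w = c • w := by
  simpa only [LinearMap.ext_iff, Subtype.ext_iff, exteriorPower_coe_map, LinearMap.id_apply,
    LinearMap.smul_apply, LinearEquiv.coe_coe] using
    second_exterior_power_map_eq_id_iff_general two_ne_zero
      (by rw [← Module.finrank_eq_rank, hW]; norm_num) (g : W →ₗ[K] W)
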